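/- Twist relation: let a, b, c ∈ ℂ \ (1/2)ℤ with a+b−c ∈ {0,1,…,n−1}, and set t_x = x(x+1−n) for x ∈ ℂ. Then R_{b,a} ∘ Y_c^{b,a} = ξ^{t_c − t_a − t_b} · Y_c^{a,b} as linear maps V^c → V^a ⊗ V^b. -/

import Mathlib

open Complex Finset Filter
open scoped Matrix Kronecker Real

noncomputable section

/-- `ξ^a = exp(π √-1 a / n)` for the `2n`-th root of unity `ξ = exp(π √-1/n)`. -/
def xic (n : ℕ) (a : ℂ) : ℂ := Complex.exp (Real.pi * Complex.I * a / n)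

/-- `{a} = ξ^a - ξ^{-a}`. -/
def qn (n : ℕ) (a : ℂ) : ℂ := xic n a - xic n (-a)

/-- `{k}! = {1}{2}⋯{k}`. -/
def qfac (n : ℕ) (k : ℕ) : ℂ := ∏ j ∈ Finset.range k, qn n ((j : ℂ) + 1)

-- The quantum binomial `[a¦b]`, defined (and nonzero) only when `a - b ∈ {0,1,…,n-1}`.
open Classical in
def qbin (n : ℕ) (a b : ℂ) : ℂ :=
  if h : ∃ k : ℕ, k < n ∧ a - b = (k : ℂ) then
    ∏ j ∈ Finset.range h.choose, qn n (a - (j : ℂ)) / qn n (a - b - (j : ℂ))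
  else 0

/-- `[a] = {a}/{1}`. -/
def qint (n : ℕ) (a : ℂ) : ℂ := qn n a / qn n 1

/-- `a` is not a half-integer. -/
def NotHalfInt (a : ℂ) : Prop := ∀ m : ℤ, a ≠ (m : ℂ) / 2

/-- `x ∈ {0, 1, …, n-1}` (as a complex number). -/
def InZn (n : ℕ) (x : ℂ) : Prop := ∃ k : ℕ, k < n ∧ x = (k : ℂ)

/-- The matrix of `E` on `V^a = ℂ^n`: `E e_j = [j] e_{j-1}` (independent of `a`). -/
def Emat (n : ℕ) : Matrix (Fin n) (Fin n) ℂ :=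
  Matrix.of fun i j => if (j : ℕ) = (i : ℕ) + 1 then qint n ((j : ℕ) : ℂ) else 0

/-- The matrix of `F` on `V^a`: `F e_j = [2a-j] e_{j+1}` (with `e_n = 0`). -/
def Fmat (n : ℕ) (a : ℂ) : Matrix (Fin n) (Fin n) ℂ :=
  Matrix.of fun i j => if (i : ℕ) = (j : ℕ) + 1 then qint n (2 * a - ((j : ℕ) : ℂ)) else 0

/-- The matrix of `K` on `V^a`: `K e_j = ξ^{a-j} e_j`. -/
def Kmat (n : ℕ) (a : ℂ) : Matrix (Fin n) (Fin n) ℂ :=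
  Matrix.of fun i j => if i = j then xic n (a - ((i : ℕ) : ℂ)) else 0

/-- The matrix of `K⁻¹` on `V^a`. -/
def Kinvmat (n : ℕ) (a : ℂ) : Matrix (Fin n) (Fin n) ℂ :=
  Matrix.of fun i j => if i = j then xic n (-(a - ((i : ℕ) : ℂ))) else 0

/-- The `R`-matrix `R_{a,b} : V^a ⊗ V^b → V^b ⊗ V^a`:
`R(e_u ⊗ e_v) = Σ_m {m}! ξ^{2(a-u)(b-v) - m(a-b-u+v) - m(m+1)/2} [u¦u-m] [2b-v¦2b-v-m]
e_{v+m} ⊗ e_{u-m}`; the entry at row `(h,k)`, column `(u,v)` is the coefficient of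
`e_h ⊗ e_k`, nonzero only when `h + k = u + v` and `h ≥ v` (with `m = h - v`). -/
def Rmat (n : ℕ) (a b : ℂ) : Matrix (Fin n × Fin n) (Fin n × Fin n) ℂ :=
  Matrix.of fun p q =>
    if ((p.1 : ℕ) + (p.2 : ℕ) = (q.1 : ℕ) + (q.2 : ℕ)) ∧ ((q.2 : ℕ) ≤ (p.1 : ℕ)) then
      (fun m : ℕ =>
        qfac n m *
        xic n (2 * (a - ((q.1 : ℕ) : ℂ)) * (b - ((q.2 : ℕ) : ℂ))
            - (m : ℂ) * (a - b - ((q.1 : ℕ) : ℂ) + ((q.2 : ℕ) : ℂ))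
            - (m : ℂ) * ((m : ℂ) + 1) / 2) *
        qbin n ((q.1 : ℕ) : ℂ) (((q.1 : ℕ) : ℂ) - (m : ℂ)) *
        qbin n (2 * b - ((q.2 : ℕ) : ℂ)) (2 * b - ((q.2 : ℕ) : ℂ) - (m : ℂ)))
      ((p.1 : ℕ) - (q.2 : ℕ))
    else 0

/-- The Clebsch-Gordan quantum coefficient `C^{a,b,c}_{u,v,t}`. -/
def CG (n : ℕ) (a b c : ℂ) (u v t : ℕ) : ℂ :=
  Complex.exp (Real.pi * Complex.I * (c - a - b) / 2) *
  (-1 : ℂ) ^ ((v : ℤ) - (t : ℤ)) *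
  xic n (((v : ℂ) * (2 * b - (v : ℂ) + 1) - (u : ℂ) * (2 * a - (u : ℂ) + 1)) / 2) *
  (qbin n (2 * c) (2 * c - (t : ℂ)))⁻¹ *
  qbin n (2 * c) (a + b + c - ((n : ℂ) - 1)) *
  ∑ z ∈ Finset.range (t + 1),
    (-1 : ℂ) ^ z * xic n ((2 * (z : ℂ) - (t : ℂ)) * (2 * c - (t : ℂ) + 1) / 2) *
    qbin n (a + b - c) ((u : ℂ) - (z : ℂ)) *
    qbin n (2 * a - (u : ℂ) + (z : ℂ)) (2 * a - (u : ℂ)) *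
    qbin n (2 * b - (v : ℂ) + ((t : ℂ) - (z : ℂ))) (2 * b - (v : ℂ))

-- The inclusion `Y_c^{a,b} : V^c → V^a ⊗ V^b`.
open Classical in
def Yinc (n : ℕ) (a b c : ℂ) : Matrix (Fin n × Fin n) (Fin n) ℂ :=
  Matrix.of fun p t =>
    if ((p.1 : ℕ) : ℂ) + ((p.2 : ℕ) : ℂ) - ((t : ℕ) : ℂ) = a + b - c then
      CG n a b c (p.1 : ℕ) (p.2 : ℕ) (t : ℕ)
    else 0

-- The projection `Y_{a,b}^c : V^a ⊗ V^b → V^c`.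
open Classical in
def Yproj (n : ℕ) (a b c : ℂ) : Matrix (Fin n) (Fin n × Fin n) ℂ :=
  Matrix.of fun t p =>
    if ((p.1 : ℕ) : ℂ) + ((p.2 : ℕ) : ℂ) - ((t : ℕ) : ℂ) = a + b - c then
      CG n ((n : ℂ) - 1 - b) ((n : ℂ) - 1 - a) ((n : ℂ) - 1 - c)
        (n - 1 - (p.2 : ℕ)) (n - 1 - (p.1 : ℕ)) (n - 1 - (t : ℕ))
    else 0

-- Extracts the natural number `k` with `x = k` (0 if there is none).
open Classical in
def natIdx (x : ℂ) : ℕ := if h : ∃ k : ℕ, x = (k : ℂ) then h.choose else 0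

/-- The `SL(2,ℂ)` quantum 6j-symbol `{a b e; d c f}_ξ`. -/
def sixj (n : ℕ) (a b e d c f : ℂ) : ℂ :=
  (-1 : ℂ) ^ (n - 1 + natIdx (a + f - c)) *
  (qbin n (2 * f + (n : ℂ)) (2 * f + 1))⁻¹ *
  (qfac n (natIdx (d + e - c)) * qfac n (natIdx (a + b - e)) /
    (qfac n (natIdx (b + d - f)) * qfac n (natIdx (a + f - c)))) *
  qbin n (2 * e) (a + b + e + 1 - (n : ℂ)) *
  (qbin n (2 * e) (e + c - d))⁻¹ *
  ∑ z ∈ Finset.Icc (natIdx (d + e - c) - natIdx (b + d - f))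
      (min (natIdx (d + e - c)) (natIdx (a + f - c))),
    (-1 : ℂ) ^ z * qbin n (a + f + c + 1) (2 * c + (z : ℂ) + 1) *
    qbin n ((a + c - f) + (z : ℂ)) (a + c - f) *
    qbin n ((b + f - d) + (d + e - c) - (z : ℂ)) (b + f - d) *
    qbin n ((d + c - e) + (z : ℂ)) (d + f - b)

/-- The tetrahedral symbol `{a b e; d c f}_tet = {a b e; d c f}_ξ · [2f+n¦2f+1]`. -/
def sixjtet (n : ℕ) (a b e d c f : ℂ) : ℂ :=
  sixj n a b e d c f * qbin n (2 * f + (n : ℂ)) (2 * f + 1)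

/-- The Lobachevsky function `Λ(x) = -∫_0^x log|2 sin t| dt`. -/
def lob (x : ℝ) : ℝ := -∫ t in (0 : ℝ)..x, Real.log |2 * Real.sin t|

/-- A triple of integers is admissible. -/
def Admissible (n : ℕ) (i j k : ℤ) : Prop :=
  0 < i ∧ 0 < j ∧ 0 < k ∧ i < (n : ℤ) - 1 ∧ j < (n : ℤ) - 1 ∧ k < (n : ℤ) - 1 ∧
  (n : ℤ) - 1 < i + j + k ∧ i + j + k < 2 * ((n : ℤ) - 1) ∧
  0 < i + j - k ∧ 0 < j + k - i ∧ 0 < k + i - j ∧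
  i + j - k < (n : ℤ) - 1 ∧ j + k - i < (n : ℤ) - 1 ∧ k + i - j < (n : ℤ) - 1


theorem xic_add (n : ℕ) (x y : ℂ) : xic n (x + y) = xic n x * xic n y := by
  unfold xic
  rw [← Complex.exp_add]
  congr 1
  ring

theorem xic_zero (n : ℕ) : xic n 0 = 1 := by simp [xic]

theorem xic_ne_zero (n : ℕ) (x : ℂ) : xic n x ≠ 0 := Complex.exp_ne_zero _

theorem qn_zero (n : ℕ) : qn n 0 = 0 := by simp [qn]

theorem xic_self (n : ℕ) (hn : 2 ≤ n) : xic n (n : ℂ) = -1 := by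
  have h : (n : ℂ) ≠ 0 := by exact_mod_cast (by omega : n ≠ 0)
  unfold xic
  rw [mul_div_assoc, div_self h, mul_one, Complex.exp_pi_mul_I]

theorem xic_mul_nat (n : ℕ) (x : ℂ) (k : ℕ) : xic n (x * k) = xic n x ^ k := by
  unfold xic
  rw [← Complex.exp_nat_mul]
  congr 1
  ring

theorem qn_self (n : ℕ) (hn : 2 ≤ n) : qn n (n : ℂ) = 0 := by
  have h := xic_self n hn
  have h2 := xic_add n (n : ℂ) (-(n : ℂ))
  rw [add_neg_cancel, xic_zero, h] at h2
  unfold qn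
  rw [h]
  linear_combination -h2

theorem qn_eq_zero (n : ℕ) (hn : 2 ≤ n) (x : ℂ) (hx : qn n x = 0) :
    ∃ l : ℤ, x = (n : ℂ) * l := by
  have h : (n : ℂ) ≠ 0 := by exact_mod_cast (by omega : n ≠ 0)
  have h1 : xic n (x + x) = 1 := by
    have h2 := xic_add n x (-x)
    rw [add_neg_cancel, xic_zero] at h2
    rw [xic_add]
    unfold qn at hx
    linear_combination xic n x * hx - h2
  unfold xic at h1
  rw [Complex.exp_eq_one_iff] at h1
  obtain ⟨l, hl⟩ := h1
  refine ⟨l, ?_⟩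
  have hp : (Real.pi : ℂ) ≠ 0 := by exact_mod_cast Real.pi_ne_zero
  have hI := Complex.I_ne_zero
  field_simp at hl
  have : (2 * Real.pi * Complex.I) * x = (2 * Real.pi * Complex.I) * (n * l) := by
    linear_combination (Real.pi * Complex.I) * hl
  exact mul_left_cancel₀ (by simp [hp]) this

theorem qn_nat_ne (n : ℕ) (hn : 2 ≤ n) (j : ℕ) (h0 : 0 < j) (hj : j < n) :
    qn n (j : ℂ) ≠ 0 := by
  intro h
  obtain ⟨l, hl⟩ := qn_eq_zero n hn _ h
  have hl' : (j : ℤ) = (n : ℤ) * l := by exact_mod_cast hl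
  have : (n : ℤ) ∣ (j : ℤ) := ⟨l, hl'⟩
  have := Int.le_of_dvd (by omega) this
  omega

theorem qn_half_ne (n : ℕ) (hn : 2 ≤ n) (c : ℂ) (hc : NotHalfInt c) (j : ℕ) :
    qn n (2 * c - (j : ℂ)) ≠ 0 := by
  intro h
  obtain ⟨l, hl⟩ := qn_eq_zero n hn _ h
  apply hc ((n : ℤ) * l + j)
  push_cast
  linear_combination hl / 2

/-- falling product -/
def PP (n : ℕ) (x : ℂ) (m : ℕ) : ℂ := ∏ j ∈ Finset.range m, qn n (x - (j : ℂ))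

theorem PP_zero (n : ℕ) (x : ℂ) : PP n x 0 = 1 := by simp [PP]

theorem PP_succ (n : ℕ) (x : ℂ) (m : ℕ) :
    PP n x (m + 1) = PP n x m * qn n (x - (m : ℂ)) := by
  simp [PP, Finset.prod_range_succ]

theorem PP_succ' (n : ℕ) (x : ℂ) (m : ℕ) :
    PP n x (m + 1) = qn n x * PP n (x - 1) m := by
  unfold PP
  rw [Finset.prod_range_succ', mul_comm]
  congr 1
  · simp
  · apply Finset.prod_congr rfl
    intro j _
    congr 1
    push_cast
    ring

theorem PP_eq_zero (n : ℕ) (x : ℂ) (m j : ℕ) (hj : j < m) (h : qn n (x - (j : ℂ)) = 0) :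
    PP n x m = 0 := Finset.prod_eq_zero (Finset.mem_range.2 hj) h

theorem PP_nat_lt (n k m : ℕ) (h : k < m) : PP n (k : ℂ) m = 0 :=
  PP_eq_zero n _ m k h (by simp [qn_zero])

theorem PP_add (n : ℕ) (x : ℂ) (i j : ℕ) :
    PP n x (i + j) = PP n x i * PP n (x - i) j := by
  unfold PP
  rw [Finset.prod_range_add]
  congr 1
  apply Finset.prod_congr rfl
  intro l _
  congr 1
  push_cast
  ring

theorem qfac_succ (n m : ℕ) : qfac n (m + 1) = qfac n m * qn n ((m : ℂ) + 1) := by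
  simp [qfac, Finset.prod_range_succ]

theorem qfac_zero (n : ℕ) : qfac n 0 = 1 := by simp [qfac]

theorem PP_self (n m : ℕ) : PP n (m : ℂ) m = qfac n m := by
  induction m with
  | zero => simp [PP, qfac]
  | succ m ih =>
    rw [PP_succ', qfac_succ]
    push_cast
    rw [add_sub_cancel_right, ih, mul_comm]

theorem qfac_ne (n : ℕ) (hn : 2 ≤ n) (m : ℕ) (hm : m < n) : qfac n m ≠ 0 := by
  unfold qfac
  rw [Finset.prod_ne_zero_iff]
  intro j hj
  rw [Finset.mem_range] at hj
  have := qn_nat_ne n hn (j + 1) (by omega) (by omega)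
  exact_mod_cast this

theorem qbin_eq (n : ℕ) (x y : ℂ) (k : ℕ) (hk : k < n) (h : x - y = k) :
    qbin n x y = PP n x k / qfac n k := by
  have hex : ∃ k : ℕ, k < n ∧ x - y = (k : ℂ) := ⟨k, hk, h⟩
  have hch : hex.choose = k := by
    have := h.symm.trans hex.choose_spec.2
    exact_mod_cast this.symm
  unfold qbin
  rw [dif_pos hex, hch, Finset.prod_div_distrib, ← PP_self, h]
  rfl

theorem qbin_nat_zero (n N : ℕ) (i : ℤ) (hi : i < 0 ∨ (N : ℤ) < i) :
    qbin n (N : ℂ) (i : ℂ) = 0 := by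
  by_cases hex : ∃ k : ℕ, k < n ∧ (N : ℂ) - i = (k : ℂ)
  · obtain ⟨k, hk, h⟩ := hex
    rw [qbin_eq n _ _ k hk h]
    have h' : (N : ℤ) - i = k := by exact_mod_cast h
    rw [PP_nat_lt n N k (by omega), zero_div]
  · unfold qbin
    rw [dif_neg hex]

theorem sum_S (n : ℕ) (hn : 2 ≤ n) (h : ℕ) (hh : h < n) : ∀ y : ℂ,
    ∑ m ∈ Finset.range n, (-1 : ℂ) ^ m * (PP n (h : ℂ) m / qfac n m) * PP n (y + m) m *
      xic n (-(m : ℂ) * (y - h + 1) - m * (m + 1) / 2) = xic n (-2 * h * (y + 1)) := by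
  induction h with
  | zero =>
    intro y
    obtain ⟨n', rfl⟩ : ∃ n', n = n' + 1 := ⟨n - 1, by omega⟩
    rw [Finset.sum_range_succ', Finset.sum_eq_zero]
    · simp [PP_zero, qfac_zero]
    · intro m _
      rw [PP_nat_lt _ 0 (m + 1) (by omega)]
      simp
  | succ h ih =>
    intro y
    have ih1 := ih (by omega) y
    have ih2 := ih (by omega) (y + 1)
    have key : ∀ m : ℕ, m + 1 < n →
      (-1 : ℂ) ^ (m + 1) * (PP n ((h + 1 : ℕ) : ℂ) (m + 1) / qfac n (m + 1)) *
        PP n (y + (m + 1 : ℕ)) (m + 1) *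
        xic n (-((m + 1 : ℕ) : ℂ) * (y - (h + 1 : ℕ) + 1) - (m + 1 : ℕ) * ((m + 1 : ℕ) + 1) / 2) =
      (-1 : ℂ) ^ (m + 1) * (PP n (h : ℂ) (m + 1) / qfac n (m + 1)) *
        PP n (y + (m + 1 : ℕ)) (m + 1) *
        xic n (-((m + 1 : ℕ) : ℂ) * (y - h + 1) - (m + 1 : ℕ) * ((m + 1 : ℕ) + 1) / 2) -
      qn n (y + 1) * xic n (2 * h - y - 1) * ((-1 : ℂ) ^ m * (PP n (h : ℂ) m / qfac n m) *
        PP n (y + 1 + m) m *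
        xic n (-(m : ℂ) * (y + 1 - h + 1) - m * (m + 1) / 2)) := by
      intro m hm
      have h1 : PP n (y + (m + 1 : ℕ)) (m + 1) = PP n (y + 1 + m) m * qn n (y + 1) := by
        rw [PP_succ]
        congr 2 <;> push_cast <;> ring
      have hq : qn n ((m : ℂ) + 1) ≠ 0 := by
        have := qn_nat_ne n hn (m + 1) (by omega) hm
        exact_mod_cast this
      have hf := qfac_ne n hn m (by omega)
      rw [h1, PP_succ' n ((h + 1 : ℕ) : ℂ), PP_succ n (h : ℂ), qfac_succ]
      rw [show (((h + 1 : ℕ) : ℂ) - 1) = h by push_cast; ring]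
      set Z := xic n (-(m : ℂ) * (y + 1 - h + 1) - m * (m + 1) / 2) with hZ
      have e1 : xic n (-((m + 1 : ℕ) : ℂ) * (y - (h + 1 : ℕ) + 1) - (m + 1 : ℕ) * ((m + 1 : ℕ) + 1) / 2)
          = Z * xic n (h - y + m - 1) := by
        rw [hZ, ← xic_add]; congr 1; push_cast; ring
      have e2 : xic n (-((m + 1 : ℕ) : ℂ) * (y - h + 1) - (m + 1 : ℕ) * ((m + 1 : ℕ) + 1) / 2)
          = Z * xic n (h - y - 2) := by
        rw [hZ, ← xic_add]; congr 1; push_cast; ring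
      rw [e1, e2]
      have core : qn n ((h + 1 : ℕ) : ℂ) * xic n (h - y + m - 1) =
          qn n (h - m) * xic n (h - y - 2) + qn n (m + 1) * xic n (2 * h - y - 1) := by
        push_cast
        simp only [qn, sub_mul, ← xic_add]
        ring_nf
      have hQ := mul_inv_cancel₀ hq
      simp only [div_eq_mul_inv, mul_inv]
      rw [pow_succ]
      linear_combination (-1 : ℂ) * (-1) ^ m * PP n h m * PP n (y + 1 + m) m * qn n (y + 1) * Z *
          (qfac n m)⁻¹ * (qn n ((m : ℂ) + 1))⁻¹ * core -
        (-1) ^ m * PP n h m * PP n (y + 1 + m) m * qn n (y + 1) * Z *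
          (qfac n m)⁻¹ * xic n (2 * h - y - 1) * hQ
    obtain ⟨n', rfl⟩ : ∃ n', n = n' + 1 := ⟨n - 1, by omega⟩
    rw [Finset.sum_range_succ'] at ih1 ⊢
    rw [Finset.sum_range_succ, PP_nat_lt _ h n' (by omega)] at ih2
    rw [Finset.sum_congr rfl (fun m hm => key m (by have := Finset.mem_range.1 hm; omega)),
      Finset.sum_sub_distrib, ← Finset.mul_sum]
    simp only [zero_div, mul_zero, zero_mul, add_zero] at ih2
    rw [ih2]
    simp only [PP_zero, Nat.cast_zero, neg_zero, zero_mul, zero_div, sub_zero] at ih1 ⊢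
    have e : qn (n' + 1) (y + 1) * xic (n' + 1) (2 * h - y - 1) * xic (n' + 1) (-2 * h * (y + 1 + 1))
        = xic (n' + 1) (-2 * h * (y + 1)) - xic (n' + 1) (-2 * ((h + 1 : ℕ) : ℂ) * (y + 1)) := by
      push_cast
      simp only [qn, sub_mul, ← xic_add]
      ring_nf
    rw [e]
    linear_combination ih1

def rho (n : ℕ) (a b : ℂ) (h k : ℤ) (m : ℕ) : ℂ :=
  xic n (2 * (a - h) * (b - k) + m * ((b - k) - (a - h)) - m * (m + 1) / 2) *
    PP n (k + m) m * PP n (2 * a - h + m) m / qfac n m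

theorem rho_coef (n : ℕ) (hn : 2 ≤ n) (a b : ℂ) (h k : ℤ) (m : ℕ) (hm : m + 1 < n) :
    rho n a b h k (m + 1) * qn n (2 * b - k - m) * xic n (a - h + m + 1) +
      rho n a b h k m * xic n (k + m - b) * qn n (2 * a - h + m + 1) =
    qn n (2 * a - h + 1) * xic n (b - k) * rho n a b (h - 1) k m +
      xic n (h - a) * qn n (2 * b - k + 1) * rho n a b h (k - 1) (m + 1) := by
  unfold rho
  have hq : qn n ((m : ℂ) + 1) ≠ 0 := by
    have := qn_nat_ne n hn (m + 1) (by omega) hm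
    exact_mod_cast this
  have hf := qfac_ne n hn m (by omega)
  have p1 : PP n ((k : ℂ) + ((m + 1 : ℕ) : ℂ)) (m + 1) = qn n (k + m + 1) * PP n (k + m) m := by
    rw [PP_succ']; congr 2 <;> push_cast <;> ring
  have p2 : PP n (2 * a - h + ((m + 1 : ℕ) : ℂ)) (m + 1)
      = qn n (2 * a - h + m + 1) * PP n (2 * a - h + m) m := by
    rw [PP_succ']; congr 2 <;> push_cast <;> ring
  have p3 : PP n (((k - 1 : ℤ) : ℂ) + ((m + 1 : ℕ) : ℂ)) (m + 1) = PP n (k + m) m * qn n k := by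
    rw [PP_succ]; congr 2 <;> push_cast <;> ring
  have p4 : qn n (2 * a - h + 1) * PP n (2 * a - ((h - 1 : ℤ) : ℂ) + m) m
      = qn n (2 * a - h + m + 1) * PP n (2 * a - h + m) m := by
    rw [← p2, PP_succ, mul_comm]; congr 2 <;> push_cast <;> ring
  set Z := xic n (2 * (a - h) * (b - k) + m * ((b - k) - (a - h)) - m * (m + 1) / 2) with hZ
  have e1 : xic n (2 * (a - h) * (b - k) + ((m + 1 : ℕ) : ℂ) * ((b - k) - (a - h))
      - ((m + 1 : ℕ) : ℂ) * (((m + 1 : ℕ) : ℂ) + 1) / 2) = Z * xic n ((b - k) - (a - h) - (m + 1)) := by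
    rw [hZ, ← xic_add]; congr 1; push_cast; ring
  have e2 : xic n (2 * (a - ((h - 1 : ℤ) : ℂ)) * (b - k) + m * ((b - k) - (a - ((h - 1 : ℤ) : ℂ)))
      - m * (m + 1) / 2) = Z * xic n (2 * (b - k) - m) := by
    rw [hZ, ← xic_add]; congr 1; push_cast; ring
  have e3 : xic n (2 * (a - h) * (b - ((k - 1 : ℤ) : ℂ)) + ((m + 1 : ℕ) : ℂ) *
      ((b - ((k - 1 : ℤ) : ℂ)) - (a - h)) - ((m + 1 : ℕ) : ℂ) * (((m + 1 : ℕ) : ℂ) + 1) / 2)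
      = Z * xic n ((a - h) + (b - k)) := by
    rw [hZ, ← xic_add]; congr 1; push_cast; ring
  rw [e1, e2, e3, p1, p2, p3, qfac_succ]
  have core : qn n (k + m + 1) * qn n (2 * b - k - m) * xic n ((b - k) - (a - h) - (m + 1)) *
      xic n (a - h + m + 1) + qn n (m + 1) * xic n (k + m - b) =
      qn n (m + 1) * xic n (b - k) * xic n (2 * (b - k) - m) +
      xic n (h - a) * qn n (2 * b - k + 1) * qn n k * xic n ((a - h) + (b - k)) := by
    simp only [qn, sub_mul, mul_sub, ← xic_add]
    ring_nf
  have hQ := mul_inv_cancel₀ hq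
  simp only [div_eq_mul_inv, mul_inv]
  linear_combination Z * PP n (k + m) m * qn n (2 * a - h + m + 1) * PP n (2 * a - h + m) m *
      (qfac n m)⁻¹ * (qn n ((m : ℂ) + 1))⁻¹ * core
    - Z * PP n (k + m) m * (qfac n m)⁻¹ * xic n (b - k) * xic n (2 * (b - k) - m) * p4
    - Z * PP n (k + m) m * (qfac n m)⁻¹ * qn n (2 * a - h + m + 1) * PP n (2 * a - h + m) m *
      (xic n (k + m - b) - xic n (b - k) * xic n (2 * (b - k) - m)) * hQ

theorem intertwine (n : ℕ) (hn : 2 ≤ n) (a b : ℂ) (w : ℤ → ℤ → ℂ)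
    (hw : ∀ u v, v < 0 → w u v = 0) (h k : ℤ) (hh : h < n) :
    ∑ m ∈ Finset.range n, rho n a b h k m *
      (qn n (2 * b - (k + m) + 1) * xic n (a - (h - m)) * w (k + m - 1) (h - m) +
        xic n (k + m - b) * qn n (2 * a - (h - m) + 1) * w (k + m) (h - m - 1)) =
    qn n (2 * a - h + 1) * xic n (b - k) *
        ∑ m ∈ Finset.range n, rho n a b (h - 1) k m * w (k + m) (h - 1 - m) +
      xic n (h - a) * qn n (2 * b - k + 1) *
        ∑ m ∈ Finset.range n, rho n a b h (k - 1) m * w (k - 1 + m) (h - m) := by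
  obtain ⟨n', rfl⟩ : ∃ n', n = n' + 1 := ⟨n - 1, by omega⟩
  simp only [mul_add, Finset.sum_add_distrib]
  rw [Finset.sum_range_succ', Finset.sum_range_succ _ n', Finset.sum_range_succ _ n',
    Finset.sum_range_succ' (fun m : ℕ => rho (n' + 1) a b h (k - 1) m * w (k - 1 + m) (h - m)) n']
  rw [hw (k + n') (h - n' - 1) (by push_cast at hh; omega),
    hw (k + n') (h - 1 - n') (by push_cast at hh; omega)]
  have z : rho (n' + 1) a b h k 0 * (qn (n' + 1) (2 * b - (k + (0 : ℕ)) + 1) *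
      xic (n' + 1) (a - (h - (0 : ℕ))) * w (k + (0 : ℕ) - 1) (h - (0 : ℕ))) =
      xic (n' + 1) (h - a) * qn (n' + 1) (2 * b - k + 1) *
      (rho (n' + 1) a b h (k - 1) 0 * w (k - 1 + (0 : ℕ)) (h - (0 : ℕ))) := by
    have hx : xic (n' + 1) (2 * (a - h) * (b - k)) * xic (n' + 1) (a - h) =
        xic (n' + 1) (h - a) * xic (n' + 1) (2 * (a - h) * (b - (k - 1))) := by
      rw [← xic_add, ← xic_add]; congr 1; ring
    simp only [rho, PP_zero, qfac_zero]
    push_cast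
    simp only [add_zero, sub_zero, zero_mul, zero_div, mul_one, div_one]
    linear_combination qn (n' + 1) (2 * b - k + 1) * w (k - 1) h * hx
  have s : ∑ m ∈ Finset.range n', rho (n' + 1) a b h k (m + 1) *
        (qn (n' + 1) (2 * b - (k + ((m + 1 : ℕ) : ℂ)) + 1) *
        xic (n' + 1) (a - (h - ((m + 1 : ℕ) : ℂ))) * w (k + ((m + 1 : ℕ) : ℤ) - 1) (h - ((m + 1 : ℕ) : ℤ))) +
      ∑ m ∈ Finset.range n', rho (n' + 1) a b h k m *
        (xic (n' + 1) (k + m - b) * qn (n' + 1) (2 * a - (h - m) + 1) * w (k + m) (h - m - 1)) =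
      qn (n' + 1) (2 * a - h + 1) * xic (n' + 1) (b - k) *
        ∑ m ∈ Finset.range n', rho (n' + 1) a b (h - 1) k m * w (k + m) (h - 1 - m) +
      xic (n' + 1) (h - a) * qn (n' + 1) (2 * b - k + 1) *
        ∑ m ∈ Finset.range n', rho (n' + 1) a b h (k - 1) (m + 1) *
          w (k - 1 + ((m + 1 : ℕ) : ℤ)) (h - ((m + 1 : ℕ) : ℤ)) := by
    rw [Finset.mul_sum, Finset.mul_sum, ← Finset.sum_add_distrib, ← Finset.sum_add_distrib]
    apply Finset.sum_congr rfl
    intro m hm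
    have := rho_coef (n' + 1) hn a b h k m (by have := Finset.mem_range.1 hm; omega)
    rw [show (k + ((m + 1 : ℕ) : ℤ) - 1) = k + m by push_cast; ring,
      show (k - 1 + ((m + 1 : ℕ) : ℤ)) = k + m by push_cast; ring,
      show (h - ((m + 1 : ℕ) : ℤ)) = h - 1 - m by push_cast; ring,
      show (h - m - 1 : ℤ) = h - 1 - m by ring,
      show 2 * b - ((k : ℂ) + ((m + 1 : ℕ) : ℂ)) + 1 = 2 * b - k - m by push_cast; ring,
      show a - ((h : ℂ) - ((m + 1 : ℕ) : ℂ)) = a - h + m + 1 by push_cast; ring,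
      show 2 * a - ((h : ℂ) - m) + 1 = 2 * a - h + m + 1 by ring]
    linear_combination w (k + m) (h - 1 - m) * this
  linear_combination s + z

def qe (a b : ℂ) (u v : ℤ) : ℂ :=
  ((v : ℂ) * (2 * b - (v : ℂ) + 1) - (u : ℂ) * (2 * a - (u : ℂ) + 1)) / 2

def TT (n N : ℕ) (a b c : ℂ) (u v : ℤ) (t z : ℕ) : ℂ :=
  (-1 : ℂ) ^ z * xic n ((2 * (z : ℂ) - (t : ℂ)) * (2 * c - (t : ℂ) + 1) / 2) *
    qbin n (N : ℂ) ((u - (z : ℤ) : ℤ) : ℂ) *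
    (PP n (2 * a - (u : ℂ) + (z : ℂ)) z / qfac n z) *
    (PP n (2 * b - (v : ℂ) + ((t : ℂ) - (z : ℂ))) (t - z) / qfac n (t - z))

def WW (n N : ℕ) (a b c : ℂ) (u v : ℤ) (t : ℕ) : ℂ :=
  (-1 : ℂ) ^ (v - (t : ℤ)) * xic n (qe a b u v) * (qfac n t / PP n (2 * c) t) *
    ∑ z ∈ Finset.range (t + 1), TT n N a b c u v t z

theorem termA (n N : ℕ) (hn : 2 ≤ n) (a b c : ℂ) (u v : ℤ) (t z : ℕ) (hz : z ≤ t) (ht : t + 1 < n)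
    (hN : c = a + b - N) (huv : (u : ℂ) + v = N + t + 1) :
    xic n (qe a b u v) * (xic n (((z + 1 : ℕ) : ℂ) - t - 1) * qn n ((z + 1 : ℕ) : ℂ) *
      TT n N a b c u v (t + 1) (z + 1)) =
    -(qn n (2 * a - u + 1) * xic n (b - v) * (xic n (qe a b (u - 1) v) *
      TT n N a b c (u - 1) v t z)) := by
  unfold TT
  have hq := qn_nat_ne n hn (z + 1) (by omega) (by omega)
  have hQ := mul_inv_cancel₀ hq
  have hf : qfac n (z + 1) = qfac n z * qn n ((z + 1 : ℕ) : ℂ) := by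
    rw [qfac_succ]; push_cast; rfl
  have p1 : PP n (2 * a - u + ((z + 1 : ℕ) : ℂ)) (z + 1)
      = PP n (2 * a - ((u - 1 : ℤ) : ℂ) + z) z * qn n (2 * a - u + 1) := by
    rw [PP_succ]; congr 2 <;> push_cast <;> ring
  have hx : xic n (qe a b u v) * xic n (((z + 1 : ℕ) : ℂ) - t - 1) *
      xic n ((2 * ((z + 1 : ℕ) : ℂ) - ((t + 1 : ℕ) : ℂ)) * (2 * c - ((t + 1 : ℕ) : ℂ) + 1) / 2) =
      xic n (b - v) * xic n (qe a b (u - 1) v) *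
      xic n ((2 * (z : ℂ) - (t : ℂ)) * (2 * c - (t : ℂ) + 1) / 2) := by
    simp only [← xic_add]
    congr 1
    unfold qe
    push_cast
    linear_combination hN + huv
  rw [p1, hf, show t + 1 - (z + 1) = t - z by omega,
    show (u - ((z + 1 : ℕ) : ℤ)) = u - 1 - z by push_cast; ring,
    show ((t + 1 : ℕ) : ℂ) - ((z + 1 : ℕ) : ℂ) = t - z by push_cast; ring]
  simp only [div_eq_mul_inv, mul_inv] at hx ⊢
  rw [pow_succ]
  set G := qbin n (N : ℂ) ((u - 1 - (z : ℤ) : ℤ) : ℂ)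
  set P2 := PP n (2 * b - (v : ℂ) + ((t : ℂ) - (z : ℂ))) (t - z)
  set P1 := PP n (2 * a - ((u - 1 : ℤ) : ℂ) + z) z
  linear_combination (-(-1 : ℂ) ^ z * qn n ((z + 1 : ℕ) : ℂ) * G * P1 * qn n (2 * a - u + 1) *
      (qfac n z)⁻¹ * (qn n ((z + 1 : ℕ) : ℂ))⁻¹ * P2 * (qfac n (t - z))⁻¹) * hx -
    ((-1 : ℂ) ^ z * G * P1 * qn n (2 * a - u + 1) * (qfac n z)⁻¹ * P2 * (qfac n (t - z))⁻¹ *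
      (xic n (b - v) * xic n (qe a b (u - 1) v) *
      xic n ((2 * (z : ℂ) - (t : ℂ)) * (2 * c - (t : ℂ) + 1) * 2⁻¹))) * hQ

theorem termB (n N : ℕ) (hn : 2 ≤ n) (a b c : ℂ) (u v : ℤ) (t z : ℕ) (hz : z ≤ t) (ht : t + 1 < n)
    (hN : c = a + b - N) (huv : (u : ℂ) + v = N + t + 1) :
    xic n (qe a b u v) * (xic n (z : ℂ) * qn n ((t : ℂ) + 1 - z) *
      TT n N a b c u v (t + 1) z) =
    xic n (u - a) * qn n (2 * b - v + 1) * (xic n (qe a b u (v - 1)) *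
      TT n N a b c u (v - 1) t z) := by
  obtain ⟨s, rfl⟩ : ∃ s, t = z + s := ⟨t - z, by omega⟩
  unfold TT
  have hq := qn_nat_ne n hn (s + 1) (by omega) (by omega)
  have hQ := mul_inv_cancel₀ hq
  have hf : qfac n (s + 1) = qfac n s * qn n ((s + 1 : ℕ) : ℂ) := by
    rw [qfac_succ]; push_cast; rfl
  have p1 : PP n (2 * b - v + (((z + s + 1 : ℕ) : ℂ) - z)) (s + 1)
      = PP n (2 * b - ((v - 1 : ℤ) : ℂ) + (((z + s : ℕ) : ℂ) - z)) s * qn n (2 * b - v + 1) := by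
    rw [PP_succ]; congr 2 <;> push_cast <;> ring
  have hx : xic n (qe a b u v) * xic n (z : ℂ) *
      xic n ((2 * (z : ℂ) - ((z + s + 1 : ℕ) : ℂ)) * (2 * c - ((z + s + 1 : ℕ) : ℂ) + 1) / 2) =
      xic n (u - a) * xic n (qe a b u (v - 1)) *
      xic n ((2 * (z : ℂ) - ((z + s : ℕ) : ℂ)) * (2 * c - ((z + s : ℕ) : ℂ) + 1) / 2) := by
    simp only [← xic_add]
    congr 1
    unfold qe
    push_cast at huv ⊢
    linear_combination -hN - huv
  rw [show z + s + 1 - z = s + 1 by omega, show z + s - z = s by omega, p1, hf,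
    show ((z + s : ℕ) : ℂ) + 1 - z = ((s + 1 : ℕ) : ℂ) by push_cast; ring]
  simp only [div_eq_mul_inv, mul_inv] at hx ⊢
  set G := qbin n (N : ℂ) ((u - (z : ℤ) : ℤ) : ℂ)
  set P2 := PP n (2 * b - ((v - 1 : ℤ) : ℂ) + (((z + s : ℕ) : ℂ) - z)) s
  set P1 := PP n (2 * a - (u : ℂ) + z) z
  linear_combination ((-1 : ℂ) ^ z * qn n ((s + 1 : ℕ) : ℂ) * G * P1 * qn n (2 * b - v + 1) *
      (qfac n z)⁻¹ * (qn n ((s + 1 : ℕ) : ℂ))⁻¹ * P2 * (qfac n s)⁻¹) * hx +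
    ((-1 : ℂ) ^ z * G * P1 * qn n (2 * b - v + 1) * (qfac n z)⁻¹ * P2 * (qfac n s)⁻¹ *
      (xic n (u - a) * xic n (qe a b u (v - 1)) *
      xic n ((2 * (z : ℂ) - ((z + s : ℕ) : ℂ)) * (2 * c - ((z + s : ℕ) : ℂ) + 1) * 2⁻¹))) * hQ

theorem WW_rec (n N : ℕ) (hn : 2 ≤ n) (a b c : ℂ) (hc : NotHalfInt c) (u v : ℤ) (t : ℕ)
    (ht : t + 1 < n) (hN : c = a + b - N) (huv : u + v = N + t + 1) :
    qn n (2 * c - t) * WW n N a b c u v (t + 1) =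
      qn n (2 * a - u + 1) * xic n (b - v) * WW n N a b c (u - 1) v t +
      xic n (u - a) * qn n (2 * b - v + 1) * WW n N a b c u (v - 1) t := by
  have huv' : (u : ℂ) + v = N + t + 1 := by exact_mod_cast huv
  have hcq := qn_half_ne n hn c hc t
  have hsum : xic n (qe a b u v) * (qn n ((t : ℂ) + 1) *
      ∑ z ∈ Finset.range (t + 1 + 1), TT n N a b c u v (t + 1) z) =
      -(qn n (2 * a - u + 1) * xic n (b - v) * (xic n (qe a b (u - 1) v) *
        ∑ z ∈ Finset.range (t + 1), TT n N a b c (u - 1) v t z)) +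
      xic n (u - a) * qn n (2 * b - v + 1) * (xic n (qe a b u (v - 1)) *
        ∑ z ∈ Finset.range (t + 1), TT n N a b c u (v - 1) t z) := by
    have hsplit : ∀ z : ℕ, qn n ((t : ℂ) + 1) * TT n N a b c u v (t + 1) z =
        xic n ((z : ℂ) - t - 1) * qn n (z : ℂ) * TT n N a b c u v (t + 1) z +
        xic n (z : ℂ) * qn n ((t : ℂ) + 1 - z) * TT n N a b c u v (t + 1) z := by
      intro z
      rw [← add_mul]
      congr 1
      simp only [qn, mul_sub, ← xic_add]
      ring_nf
    rw [Finset.mul_sum, Finset.sum_congr rfl (fun z _ => hsplit z), Finset.sum_add_distrib,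
      Finset.sum_range_succ' _ (t + 1), Finset.sum_range_succ _ (t + 1)]
    rw [show ((t : ℂ) + 1 - ((t + 1 : ℕ) : ℂ)) = 0 by push_cast; ring, Nat.cast_zero, qn_zero]
    simp only [mul_zero, zero_mul, add_zero]
    rw [mul_add]
    simp only [Finset.mul_sum]
    rw [← Finset.sum_neg_distrib]
    congr 1
    · apply Finset.sum_congr rfl
      intro z hz
      exact termA n N hn a b c u v t z (by have := Finset.mem_range.1 hz; omega) ht hN huv'
    · apply Finset.sum_congr rfl
      intro z hz
      exact termB n N hn a b c u v t z (by have := Finset.mem_range.1 hz; omega) ht hN huv'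
  unfold WW
  have s1 : (-1 : ℂ) ^ (v - ((t + 1 : ℕ) : ℤ)) = -(-1 : ℂ) ^ (v - (t : ℤ)) := by
    rw [show v - ((t + 1 : ℕ) : ℤ) = v - (t : ℤ) - 1 by push_cast; ring,
      zpow_sub_one₀ (by norm_num)]
    norm_num
  have s2 : (-1 : ℂ) ^ (v - 1 - (t : ℤ)) = -(-1 : ℂ) ^ (v - (t : ℤ)) := by
    rw [show v - 1 - (t : ℤ) = v - (t : ℤ) - 1 by ring,
      zpow_sub_one₀ (by norm_num)]
    norm_num
  rw [s1, s2, qfac_succ, PP_succ]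
  have hQ := mul_inv_cancel₀ hcq
  simp only [div_eq_mul_inv, mul_inv]
  linear_combination (-(-1 : ℂ) ^ (v - (t : ℤ)) * qfac n t * (PP n (2 * c) t)⁻¹) * hsum -
    ((-1 : ℂ) ^ (v - (t : ℤ)) * qfac n t * (PP n (2 * c) t)⁻¹ * (xic n (qe a b u v) *
    (qn n ((t : ℂ) + 1) * ∑ z ∈ Finset.range (t + 1 + 1), TT n N a b c u v (t + 1) z))) * hQ

theorem WW_neg (n N : ℕ) (a b c : ℂ) (u v : ℤ) (t : ℕ) (huv : u + v = N + t) (hv : v < 0) :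
    WW n N a b c u v t = 0 := by
  unfold WW
  rw [Finset.sum_eq_zero, mul_zero]
  intro z hz
  have := Finset.mem_range.1 hz
  unfold TT
  rw [qbin_nat_zero n N _ (Or.inr (by omega))]
  simp

theorem WW_zero (n N : ℕ) (a b c : ℂ) (u v : ℤ) :
    WW n N a b c u v 0 = (-1 : ℂ) ^ v * xic n (qe a b u v) * qbin n (N : ℂ) (u : ℂ) := by
  simp [WW, TT, PP_zero, qfac_zero, xic_zero]

theorem qfac_split (n i j : ℕ) : qfac n (i + j) = PP n ((i + j : ℕ) : ℂ) i * qfac n j := by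
  rw [← PP_self, PP_add, ← PP_self n j]
  congr 2
  push_cast
  ring

theorem bin_swap (n : ℕ) (hn : 2 ≤ n) (h k m : ℕ) (hN : h + k < n) :
    PP n ((k : ℂ) + m) m * qbin n ((h + k : ℕ) : ℂ) (((k : ℤ) + (m : ℤ) : ℤ) : ℂ) =
      qbin n ((h + k : ℕ) : ℂ) (((h : ℕ) : ℤ) : ℂ) * PP n (h : ℂ) m := by
  by_cases hm : m ≤ h
  · obtain ⟨s, rfl⟩ : ∃ s, h = m + s := ⟨h - m, by omega⟩
    rw [qbin_eq n _ _ s (by omega) (by push_cast; ring),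
      qbin_eq n _ _ k (by omega) (by push_cast; ring)]
    have f1 := qfac_split n m k
    have f2 := qfac_split n s (m + k)
    have f3 := qfac_split n k (m + s)
    have f4 := qfac_split n m s
    rw [show s + (m + k) = m + s + k by ring] at f2
    rw [show k + (m + s) = m + s + k by ring] at f3
    rw [show ((m + k : ℕ) : ℂ) = k + m by push_cast; ring] at f1
    have h1 := qfac_ne n hn s (by omega)
    have h2 := qfac_ne n hn k (by omega)
    have h3 := qfac_ne n hn (m + s) (by omega)
    have h4 := qfac_ne n hn (m + k) (by omega)
    have h5 : PP n ((m + s : ℕ) : ℂ) m = qfac n (m + s) / qfac n s := by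
      rw [eq_div_iff h1]; exact f4.symm
    have h6 : PP n ((k : ℂ) + m) m = qfac n (m + k) / qfac n k := by
      rw [eq_div_iff h2]; exact f1.symm
    have h7 : PP n ((m + s + k : ℕ) : ℂ) s = qfac n (m + s + k) / qfac n (m + k) := by
      rw [eq_div_iff h4]; exact f2.symm
    have h8 : PP n ((m + s + k : ℕ) : ℂ) k = qfac n (m + s + k) / qfac n (m + s) := by
      rw [eq_div_iff h3]; exact f3.symm
    rw [h5, h6, h7, h8]
    field_simp
  · rw [qbin_nat_zero n _ _ (Or.inr (by push_cast; omega)), PP_nat_lt n h m (by omega)]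
    simp

theorem xic_tau (n N : ℕ) (hn : 2 ≤ n) (a b c : ℂ) (hN : c = a + b - N) :
    xic n (c * (c + 1 - (n : ℂ)) - a * (a + 1 - (n : ℂ)) - b * (b + 1 - (n : ℂ))) =
    (-1) ^ N * xic n (c * (c + 1) - a * (a + 1) - b * (b + 1)) := by
  rw [← xic_self n hn, ← xic_mul_nat, ← xic_add]
  congr 1
  rw [hN]
  ring

theorem base (n N : ℕ) (hn : 2 ≤ n) (hNn : N < n) (a b c : ℂ) (hN : c = a + b - N)
    (h k : ℤ) (hk : h + k = N) :
    ∑ m ∈ Finset.range n, rho n a b h k m * WW n N b a c (k + m) (h - m) 0 =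
    xic n (c * (c + 1 - (n : ℂ)) - a * (a + 1 - (n : ℂ)) - b * (b + 1 - (n : ℂ))) *
      WW n N a b c h k 0 := by
  simp only [WW_zero]
  rcases lt_or_ge h 0 with h0 | h0
  · rw [qbin_nat_zero n N h (Or.inl h0), Finset.sum_eq_zero]
    · simp
    · intro m _
      rw [qbin_nat_zero n N _ (Or.inr (by omega))]
      simp
  rcases lt_or_ge k 0 with k0 | k0
  · rw [qbin_nat_zero n N h (Or.inr (by omega)), Finset.sum_eq_zero]
    · simp
    · intro m _
      rcases lt_or_ge (k + m) 0 with h1 | h1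
      · rw [qbin_nat_zero n N _ (Or.inl h1)]
        simp
      · obtain ⟨j, hj⟩ := Int.eq_ofNat_of_zero_le h1
        have hj' : (k : ℂ) + m = (j : ℂ) := by exact_mod_cast hj
        unfold rho
        rw [hj', PP_nat_lt n j m (by omega)]
        simp
  obtain ⟨h, rfl⟩ := Int.eq_ofNat_of_zero_le h0
  obtain ⟨k, rfl⟩ := Int.eq_ofNat_of_zero_le k0
  have hk' : N = h + k := by omega
  subst hk'
  have hS := sum_S n hn h (by omega) (2 * a - h)
  rw [xic_tau n _ hn a b c hN]
  have hterm : ∀ m ∈ Finset.range n, rho n a b h k m *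
      ((-1 : ℂ) ^ ((h : ℤ) - (m : ℤ)) * xic n (qe b a (k + m) (h - m)) *
        qbin n ((h + k : ℕ) : ℂ) (((k : ℤ) + (m : ℤ) : ℤ) : ℂ)) =
      ((-1 : ℂ) ^ h * qbin n ((h + k : ℕ) : ℂ) (((h : ℕ) : ℤ) : ℂ) *
        xic n (2 * (a - h) * (b - k) + qe b a k h)) *
      ((-1 : ℂ) ^ m * (PP n (h : ℂ) m / qfac n m) * PP n (2 * a - h + m) m *
      xic n (-(m : ℂ) * (2 * a - h - h + 1) - m * (m + 1) / 2)) := by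
    intro m _
    have hs : (-1 : ℂ) ^ ((h : ℤ) - (m : ℤ)) = (-1) ^ h * (-1) ^ m := by
      rw [zpow_sub₀ (by norm_num), zpow_natCast, zpow_natCast]
      rcases neg_one_pow_eq_or ℂ m with h1 | h1 <;> rw [h1] <;> simp [div_neg]
    have hx : xic n (2 * (a - h) * (b - k) + m * ((b - k) - (a - h)) - m * (m + 1) / 2) *
        xic n (qe b a (k + m) (h - m)) = xic n (2 * (a - h) * (b - k) + qe b a k h) *
        xic n (-(m : ℂ) * (2 * a - h - h + 1) - m * (m + 1) / 2) := by
      rw [← xic_add, ← xic_add]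
      congr 1
      unfold qe
      push_cast
      ring
    have hb := bin_swap n hn h k m hNn
    unfold rho
    rw [hs]
    simp only [Int.cast_natCast] at hb ⊢
    set A := (-1 : ℂ) ^ h
    set B := (-1 : ℂ) ^ m
    simp only [div_eq_mul_inv] at hx ⊢
    set G1 := qbin n ((h + k : ℕ) : ℂ) (((k : ℤ) + (m : ℤ) : ℤ) : ℂ)
    linear_combination (PP n (k + m) m * PP n (2 * a - h + m) m * (qfac n m)⁻¹ * A * B * G1) * hx +
      (PP n (2 * a - h + m) m * (qfac n m)⁻¹ * A * B *
      xic n (2 * (a - h) * (b - k) + qe b a k h) *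
        xic n (-(m : ℂ) * (2 * a - h - h + 1) - m * (m + 1) * 2⁻¹)) * hb
  rw [Finset.sum_congr rfl hterm, ← Finset.mul_sum, hS]
  have hx : xic n (2 * (a - h) * (b - k) + qe b a k h) * xic n (-2 * h * (2 * a - h + 1)) =
      xic n (c * (c + 1) - a * (a + 1) - b * (b + 1)) * xic n (qe a b h k) := by
    rw [← xic_add, ← xic_add]
    congr 1
    unfold qe
    rw [hN]
    push_cast
    ring
  have hs : (-1 : ℂ) ^ (h + k) * (-1 : ℂ) ^ (k : ℤ) = (-1) ^ h := by
    rw [zpow_natCast, pow_add]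
    rcases neg_one_pow_eq_or ℂ k with h1 | h1 <;> rw [h1] <;> norm_num
  rw [← hs]
  set G := qbin n ((h + k : ℕ) : ℂ) (((h : ℕ) : ℤ) : ℂ)
  linear_combination (-1 : ℂ) ^ (h + k) * (-1 : ℂ) ^ (k : ℤ) * G * hx

theorem main_sum (n N : ℕ) (hn : 2 ≤ n) (hNn : N < n) (a b c : ℂ) (hc : NotHalfInt c)
    (hN : c = a + b - N) (t : ℕ) (ht : t < n) : ∀ h k : ℤ, h < n → h + k = N + t →
    ∑ m ∈ Finset.range n, rho n a b h k m * WW n N b a c (k + m) (h - m) t =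
    xic n (c * (c + 1 - (n : ℂ)) - a * (a + 1 - (n : ℂ)) - b * (b + 1 - (n : ℂ))) *
      WW n N a b c h k t := by
  induction t with
  | zero => intro h k _ hk; exact base n N hn hNn a b c hN h k (by simpa using hk)
  | succ t ih =>
    intro h k hh hk
    have ih := ih (by omega)
    push_cast at hk
    have ih1 := ih (h - 1) k (by omega) (by omega)
    have ih2 := ih h (k - 1) hh (by omega)
    have hcq := qn_half_ne n hn c hc t
    apply mul_left_cancel₀ hcq
    have hr := WW_rec n N hn a b c hc h k t ht hN (by omega)
    set w : ℤ → ℤ → ℂ := fun u v => if v < 0 then 0 else WW n N b a c u v t with hw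
    have hwW : ∀ u v : ℤ, u + v = N + t → WW n N b a c u v t = w u v := by
      intro u v huv
      simp only [hw]
      split_ifs with hv
      · exact WW_neg n N b a c u v t huv hv
      · rfl
    have hi := intertwine n hn a b w (fun u v hv => by simp [hw, hv]) h k hh
    have hL : qn n (2 * c - t) *
        ∑ m ∈ Finset.range n, rho n a b h k m * WW n N b a c (k + m) (h - m) (t + 1) =
        ∑ m ∈ Finset.range n, rho n a b h k m *
      (qn n (2 * b - (k + m) + 1) * xic n (a - (h - m)) * w (k + m - 1) (h - m) +
        xic n (k + m - b) * qn n (2 * a - (h - m) + 1) * w (k + m) (h - m - 1)) := by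
      rw [Finset.mul_sum]
      apply Finset.sum_congr rfl
      intro m _
      have := WW_rec n N hn b a c hc (k + m) (h - m) t ht (by rw [hN]; ring) (by omega)
      rw [hwW _ _ (by omega), hwW _ _ (by omega)] at this
      push_cast at this
      linear_combination rho n a b h k m * this
    rw [hL, hi, mul_left_comm, hr]
    have e1 : ∑ m ∈ Finset.range n, rho n a b (h - 1) k m * w (k + m) (h - 1 - m) =
        ∑ m ∈ Finset.range n, rho n a b (h - 1) k m * WW n N b a c (k + m) (h - 1 - m) t :=
      Finset.sum_congr rfl (fun m _ => by rw [hwW _ _ (by omega)])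
    have e2 : ∑ m ∈ Finset.range n, rho n a b h (k - 1) m * w (k - 1 + m) (h - m) =
        ∑ m ∈ Finset.range n, rho n a b h (k - 1) m * WW n N b a c (k - 1 + m) (h - m) t :=
      Finset.sum_congr rfl (fun m _ => by rw [hwW _ _ (by omega)])
    rw [e1, e2, ih1, ih2]
    ring

theorem CG_eq (n N : ℕ) (a b c : ℂ) (hN : c = a + b - N) (u v t : ℕ)
    (ht : t < n) : CG n a b c u v t = Complex.exp (Real.pi * Complex.I * (c - a - b) / 2) *
      qbin n (2 * c) (a + b + c - ((n : ℂ) - 1)) * WW n N a b c u v t := by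
  unfold CG WW
  have hs : ∑ z ∈ Finset.range (t + 1),
    (-1 : ℂ) ^ z * xic n ((2 * (z : ℂ) - (t : ℂ)) * (2 * c - (t : ℂ) + 1) / 2) *
    qbin n (a + b - c) ((u : ℂ) - (z : ℂ)) *
    qbin n (2 * a - (u : ℂ) + (z : ℂ)) (2 * a - (u : ℂ)) *
    qbin n (2 * b - (v : ℂ) + ((t : ℂ) - (z : ℂ))) (2 * b - (v : ℂ)) =
    ∑ z ∈ Finset.range (t + 1), TT n N a b c u v t z := by
    apply Finset.sum_congr rfl
    intro z hz
    have hz' := Finset.mem_range.1 hz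
    rw [qbin_eq n (2 * a - (u : ℂ) + (z : ℂ)) _ z (by omega) (by ring),
      qbin_eq n (2 * b - (v : ℂ) + ((t : ℂ) - (z : ℂ))) _ (t - z) (by omega)
        (by rw [Nat.cast_sub (by omega)]; ring)]
    unfold TT
    rw [show a + b - c = (N : ℂ) by rw [hN]; ring]
    push_cast
    rfl
  rw [hs, qbin_eq n (2 * c) (2 * c - t) t ht (by ring), inv_div]
  unfold qe
  push_cast
  ring

theorem R_eq (n : ℕ) (a b : ℂ) (h k m : ℕ) (hm : m ≤ h) (hh : h < n) :
    qfac n m * xic n (2 * (b - ((k + m : ℕ) : ℂ)) * (a - ((h - m : ℕ) : ℂ))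
            - (m : ℂ) * (b - a - ((k + m : ℕ) : ℂ) + ((h - m : ℕ) : ℂ))
            - (m : ℂ) * ((m : ℂ) + 1) / 2) *
        qbin n ((k + m : ℕ) : ℂ) (((k + m : ℕ) : ℂ) - (m : ℂ)) *
        qbin n (2 * a - ((h - m : ℕ) : ℂ)) (2 * a - ((h - m : ℕ) : ℂ) - (m : ℂ)) =
      rho n a b h k m := by
  by_cases hq : qfac n m = 0
  · unfold rho
    rw [hq]; simp
  rw [qbin_eq n _ _ m (by omega) (by ring), qbin_eq n _ _ m (by omega) (by ring)]
  unfold rho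
  rw [Nat.cast_sub hm]
  push_cast
  rw [show 2 * (b - ((k : ℂ) + m)) * (a - (h - m)) - m * (b - a - (k + m) + (h - m)) - m * (m + 1) / 2
    = 2 * (a - h) * (b - k) + m * ((b - k) - (a - h)) - m * (m + 1) / 2 by ring,
    show 2 * a - ((h : ℂ) - m) = 2 * a - h + m by ring]
  have hQ := mul_inv_cancel₀ hq
  simp only [div_eq_mul_inv]
  set Z := xic n (2 * (a - h) * (b - k) + m * ((b - k) - (a - h)) - m * (m + 1) * 2⁻¹)
  linear_combination Z * PP n (k + m) m * PP n (2 * a - h + m) m * (qfac n m)⁻¹ * hQ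

theorem twist_relation (n : ℕ) (hn : 2 ≤ n) (a b c : ℂ)
    (ha : NotHalfInt a) (hb : NotHalfInt b) (hc : NotHalfInt c)
    (habc : InZn n (a + b - c)) :
    Rmat n b a * Yinc n b a c
      = xic n (c * (c + 1 - (n : ℂ)) - a * (a + 1 - (n : ℂ)) - b * (b + 1 - (n : ℂ))) •
          Yinc n a b c := by
  obtain ⟨N, hNn, hN'⟩ := habc
  have hN : c = a + b - N := by rw [← hN']; ring
  have hN2 : c = b + a - N := by rw [hN]; ring
  have hba : b + a - c = (N : ℂ) := by rw [hN]; ring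
  ext ⟨h, k⟩ t
  obtain ⟨h, hh⟩ := h
  obtain ⟨k, hk⟩ := k
  obtain ⟨t, ht⟩ := t
  rw [Matrix.mul_apply, Matrix.smul_apply, smul_eq_mul]
  have hcond : ∀ x y : ℕ, ((x : ℂ) + y - t = N) ↔ x + y = N + t := by
    intro x y
    rw [sub_eq_iff_eq_add]
    exact_mod_cast Iff.rfl
  simp only [Yinc, Rmat, Matrix.of_apply, hN', hba, hcond]
  by_cases hs : h + k = N + t
  · rw [if_pos hs, CG_eq n N a b c hN h k t ht, mul_left_comm,
      ← main_sum n N hn hNn a b c hc hN t ht h k (by exact_mod_cast hh) (by exact_mod_cast hs),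
      Finset.mul_sum]
    have hkey : ∀ m : ℕ, rho n a b h k m * WW n N b a c (k + m) (h - m) t ≠ 0 →
        m ≤ h ∧ k + m < n := by
      intro m hm
      by_contra hcon
      apply hm
      by_cases h1 : m ≤ h
      · have h2 : n ≤ k + m := by
          by_contra h3
          exact hcon ⟨h1, by omega⟩
        unfold rho
        rw [PP_eq_zero n _ m (k + m - n) (by omega)]
        · simp
        · rw [Nat.cast_sub h2]
          push_cast
          rw [sub_sub_cancel]
          exact qn_self n hn
      · rw [WW_neg n N b a c _ _ t (by omega) (by omega), mul_zero]
    have hval : ∀ m : ℕ, m ≤ h →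
        qfac n m * xic n (2 * (b - ((k + m : ℕ) : ℂ)) * (a - ((h - m : ℕ) : ℂ))
            - (m : ℂ) * (b - a - ((k + m : ℕ) : ℂ) + ((h - m : ℕ) : ℂ))
            - (m : ℂ) * ((m : ℂ) + 1) / 2) *
        qbin n ((k + m : ℕ) : ℂ) (((k + m : ℕ) : ℂ) - (m : ℂ)) *
        qbin n (2 * a - ((h - m : ℕ) : ℂ)) (2 * a - ((h - m : ℕ) : ℂ) - (m : ℂ)) *
        CG n b a c (k + m) (h - m) t =
        Complex.exp (Real.pi * Complex.I * (c - a - b) / 2) *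
          qbin n (2 * c) (a + b + c - ((n : ℂ) - 1)) *
          (rho n a b h k m * WW n N b a c (k + m) (h - m) t) := by
      intro m hm
      rw [R_eq n a b h k m hm hh, CG_eq n N b a c hN2 _ _ t ht]
      rw [show c - b - a = c - a - b by ring, show b + a + c = a + b + c by ring,
        Nat.cast_sub hm]
      push_cast
      ring
    symm
    refine Finset.sum_bij_ne_zero
      (fun m _ _ => ((⟨(k + m) % n, Nat.mod_lt _ (by omega)⟩ : Fin n),
        (⟨(h - m) % n, Nat.mod_lt _ (by omega)⟩ : Fin n))) ?_ ?_ ?_ ?_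
    · intros; exact Finset.mem_univ _
    · intro m hm hm0 m' hm' hm0' heq
      have h1 := hkey m (right_ne_zero_of_mul hm0)
      have h2 := hkey m' (right_ne_zero_of_mul hm0')
      simp only [Prod.mk.injEq, Fin.mk.injEq] at heq
      rw [Nat.mod_eq_of_lt h1.2, Nat.mod_eq_of_lt h2.2] at heq
      omega
    · rintro ⟨⟨u, hu⟩, ⟨v, hv⟩⟩ _ hne
      have h1 : h + k = u + v ∧ v ≤ h := by
        by_contra hcon
        apply hne
        rw [if_neg hcon, zero_mul]
      have hu' : u = k + (h - v) := by omega
      have hv' : v = h - (h - v) := by omega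
      rw [if_pos h1, if_pos (by show u + v = N + t; omega)] at hne
      refine ⟨h - v, Finset.mem_range.2 (by omega), ?_, ?_⟩
      · have := hval (h - v) (by omega)
        rw [← hu', ← hv'] at this
        rw [← this]
        exact hne
      · simp only [Prod.mk.injEq, Fin.mk.injEq]
        rw [← hu', ← hv', Nat.mod_eq_of_lt hu, Nat.mod_eq_of_lt hv]
        exact ⟨rfl, rfl⟩
    · intro m hm hm0
      have h1 := hkey m (right_ne_zero_of_mul hm0)
      simp only [Nat.mod_eq_of_lt h1.2, Nat.mod_eq_of_lt (show h - m < n by omega)]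
      rw [if_pos (by omega), if_pos (by omega), show h - (h - m) = m by omega]
      exact (hval m h1.1).symm
  · rw [if_neg hs, mul_zero]
    apply Finset.sum_eq_zero
    rintro ⟨u, v⟩ _
    by_cases h1 : h + k = (u : ℕ) + v
    · rw [if_neg (c := (u : ℕ) + v = N + t) (by omega), mul_zero]
    · rw [if_neg (fun hx => h1 hx.1), zero_mul]

end
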